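/- Let A be a TGBA over AP' and T a Kripke structure over AP ⊇ AP'. The Self-Loop Aggregation Product A⊠T has an accepting run if and only if the synchronized product A⊗T has an accepting run: Acc(A⊗T) ≠ ∅ ⟺ Acc(A⊠T) ≠ ∅. -/

import Mathlib

open scoped Classical

/-- Boolean formulas over atomic propositions of type `α`. -/
inductive BForm (α : Type) : Type
  | tru : BForm α
  | fls : BForm α
  | var : α → BForm α
  | band : BForm α → BForm α → BForm α
  | bor : BForm α → BForm α → BForm α
  | bnot : BForm α → BForm α

namespace BForm

variable {α : Type}

/-- Evaluation of a Boolean formula under an assignment. -/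
def eval : BForm α → (α → Bool) → Bool
  | tru, _ => true
  | fls, _ => false
  | var a, ρ => ρ a
  | band f g, ρ => f.eval ρ && g.eval ρ
  | bor f g, ρ => f.eval ρ || g.eval ρ
  | bnot f, ρ => !(f.eval ρ)

/-- Free variables (occurring atomic propositions) of a Boolean formula. -/
def FV : BForm α → Set α
  | tru => ∅
  | fls => ∅
  | var a => {a}
  | band f g => f.FV ∪ g.FV
  | bor f g => f.FV ∪ g.FV
  | bnot f => f.FV

/-- Satisfiability of a Boolean formula. -/
def Sat (f : BForm α) : Prop := ∃ ρ : α → Bool, f.eval ρ = true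

/-- The literal describing the value of the assignment `ρ` on the proposition `a`. -/
def lit (ρ : α → Bool) (a : α) : BForm α := if ρ a then var a else bnot (var a)

end BForm

/-- The formula (a conjunction of literals) encoding the restriction of the
assignment `ρ` to the finite set `AP`: the interpretation of an assignment
as a Boolean formula. -/
noncomputable def assignForm {α : Type} (AP : Finset α) (ρ : α → Bool) : BForm α :=
  (AP.toList.map (BForm.lit ρ)).foldr BForm.band BForm.tru

/-- `ρ ≡_E ρ'`: the two assignments agree on all propositions of `E`. -/
def AgreeOn {α : Type} (E : Set α) (ρ ρ' : α → Bool) : Prop := ∀ a ∈ E, ρ a = ρ' a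

/-- Restriction of an assignment to the set `E` (`false` outside of `E`). -/
noncomputable def restrS {α : Type} (E : Set α) (ρ : α → Bool) : α → Bool :=
  fun p => if p ∈ E then ρ p else false

/-- A Transition-based Generalized Büchi Automaton over atomic propositions
drawn from `α`, with alphabet `AP`, state set `Q`, acceptance conditions `F`,
transition relation `δ ⊆ Q × B(AP) × 2^F × Q` and initial state `init`. -/
structure TGBA (α : Type) where
  AP : Finset α
  Q : Type
  F : Type
  init : Q
  δ : Set (Q × BForm α × Set F × Q)

/-- A Kripke structure over atomic propositions drawn from `α`, with alphabet
`AP`, states `S` labeled by assignments via `lab`, transition relation `Δ`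
and initial state `init`. -/
structure Kripke (α : Type) where
  AP : Finset α
  S : Type
  lab : S → α → Bool
  Δ : Set (S × S)
  init : S

namespace TGBA

variable {α : Type}

/-- Well-formedness: every transition label is a satisfiable formula over `AP`. -/
def WF (A : TGBA α) : Prop := ∀ t ∈ A.δ, (t.2.1).FV ⊆ ↑A.AP ∧ (t.2.1).Sat

/-- A run: an infinite sequence of consecutive transitions starting at the
initial state. -/
def IsRun (A : TGBA α) (π : ℕ → A.Q × BForm α × Set A.F × A.Q) : Prop :=
  (π 0).1 = A.init ∧ ∀ i, π i ∈ A.δ ∧ (π i).2.2.2 = (π (i + 1)).1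

/-- An accepting run: a run visiting every acceptance condition infinitely often. -/
def IsAccRun (A : TGBA α) (π : ℕ → A.Q × BForm α × Set A.F × A.Q) : Prop :=
  A.IsRun π ∧ ∀ c : A.F, ∀ i : ℕ, ∃ j, i ≤ j ∧ c ∈ (π j).2.2.1

/-- `Acc(A) ≠ ∅`: the automaton has an accepting run. -/
def HasAccRun (A : TGBA α) : Prop := ∃ π, A.IsAccRun π

/-- The language of the TGBA: the infinite words compatible with some accepting run. -/
def Lang (A : TGBA α) : Set (ℕ → α → Bool) :=
  {w | ∃ π, A.IsAccRun π ∧ ∀ i, ((π i).2.1).eval (w i) = true}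

/-- One-step successor relation between automaton states. -/
def Step (A : TGBA α) (q q' : A.Q) : Prop := ∃ f ac, (q, f, ac, q') ∈ A.δ

/-- Reachability between automaton states. -/
def Reach (A : TGBA α) : A.Q → A.Q → Prop := Relation.ReflTransGen A.Step

/-- `FV(q)`: the union of the free variables of the labels of all transitions
reachable from `q`. -/
def FVq (A : TGBA α) (q : A.Q) : Set α :=
  {p | ∃ t ∈ A.δ, A.Reach q t.1 ∧ p ∈ (t.2.1).FV}

/-- There is some transition between the two states. -/
def HasTrans (A : TGBA α) (p₁ p₂ : A.Q) : Prop := ∃ f ac, (p₁, f, ac, p₂) ∈ A.δ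

/-- There is a transition with acceptance set `ac` between the two states. -/
def HasTransAc (A : TGBA α) (p₁ : A.Q) (ac : Set A.F) (p₂ : A.Q) : Prop :=
  ∃ f, (p₁, f, ac, p₂) ∈ A.δ

end TGBA

/-- Prepend a finite word to an infinite word. -/
def appendω {β : Type} (u : List β) (v : ℕ → β) : ℕ → β := fun n =>
  if h : n < u.length then u.get ⟨n, h⟩ else v (n - u.length)

/-- A language of infinite words is stuttering-invariant. -/
def StutterInvariantLang {β : Type} (L : Set (ℕ → β)) : Prop :=
  ∀ (u : List β) (ρ : β) (v : ℕ → β), appendω (u ++ [ρ]) v ∈ L ↔ appendω (u ++ [ρ, ρ]) v ∈ L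

/-- A TGBA is stuttering-invariant iff its language is. -/
def TGBA.StutterInvariant {α : Type} (A : TGBA α) : Prop := StutterInvariantLang A.Lang

/-- Two infinite words are stuttering equivalent: they are equal after collapsing
consecutive repeated letters, as witnessed by matching block decompositions. -/
def StutterEquiv {β : Type} (w w' : ℕ → β) : Prop :=
  ∃ ι κ : ℕ → ℕ, ι 0 = 0 ∧ κ 0 = 0 ∧ StrictMono ι ∧ StrictMono κ ∧
    ∀ k i j, ι k ≤ i → i < ι (k + 1) → κ k ≤ j → j < κ (k + 1) → w i = w' j

/-- Two languages are stuttering equivalent: every word of either language is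
stuttering equivalent to some word of the other. -/
def LangStutterEquiv {β : Type} (L L' : Set (ℕ → β)) : Prop :=
  (∀ w ∈ L, ∃ w' ∈ L', StutterEquiv w w') ∧ ∀ w' ∈ L', ∃ w ∈ L, StutterEquiv w w'

namespace Kripke

variable {α : Type}

/-- `SuccF(a, P)`: successors of states of `a`, filtered to keep only those
whose label satisfies `P`. -/
def SuccF (T : Kripke α) (a : Set T.S) (P : (α → Bool) → Prop) : Set T.S :=
  {s' | ∃ s ∈ a, (s, s') ∈ T.Δ ∧ P (T.lab s')}

/-- `ReachF(a, P)`: the least superset of `a` closed under `SuccF(·, P)`. -/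
def ReachF (T : Kripke α) (a : Set T.S) (P : (α → Bool) → Prop) : Set T.S :=
  ⋂₀ {b | a ⊆ b ∧ T.SuccF b P ⊆ b}

/-- `FSucc(a, P)`: successors of the states of `a` whose label satisfies `P`. -/
def FSucc (T : Kripke α) (a : Set T.S) (P : (α → Bool) → Prop) : Set T.S :=
  {s' | ∃ s ∈ a, (s, s') ∈ T.Δ ∧ P (T.lab s)}

/-- `FReach(a, P)`: the least superset of `a` closed under `FSucc(·, P)`. -/
def FReach (T : Kripke α) (a : Set T.S) (P : (α → Bool) → Prop) : Set T.S :=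
  ⋂₀ {b | a ⊆ b ∧ T.FSucc b P ⊆ b}

/-- The label of (a representative state of) an aggregate. -/
noncomputable def aggLab (T : Kripke α) (a : Set T.S) : α → Bool :=
  if h : a.Nonempty then T.lab h.some else fun _ => false

/-- Homogeneity of a set of states w.r.t. the observed propositions `E`. -/
def Homog (T : Kripke α) (E : Set α) (a : Set T.S) : Prop :=
  ∀ s ∈ a, ∀ s' ∈ a, AgreeOn E (T.lab s) (T.lab s')

/-- `a` is a (nonempty, homogeneous, saturated) aggregate w.r.t. `E`. -/
def IsAgg (T : Kripke α) (E : Set α) (a : Set T.S) : Prop :=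
  a.Nonempty ∧ T.Homog E a ∧ a = T.ReachF a fun ρ => AgreeOn E ρ (T.aggLab a)

/-- `a` contains a cycle of `Δ`. -/
def HasCycle (T : Kripke α) (a : Set T.S) : Prop :=
  ∃ s ∈ a, Relation.TransGen (fun x y => x ∈ a ∧ y ∈ a ∧ (x, y) ∈ T.Δ) s s

end Kripke

/-- Transition relation of the synchronized product `A ⊗ T`. -/
def synchδ {α : Type} (A : TGBA α) (T : Kripke α) :
    Set ((A.Q × T.S) × BForm α × Set A.F × (A.Q × T.S)) :=
  {t | ∃ (q₁ q₂ : A.Q) (s₁ s₂ : T.S) (ac : Set A.F),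
    t = ((q₁, s₁), assignForm T.AP (T.lab s₁), ac, (q₂, s₂)) ∧ (s₁, s₂) ∈ T.Δ ∧
    ∃ g : BForm α, (q₁, g, ac, q₂) ∈ A.δ ∧ g.eval (T.lab s₁) = true}

/-- The synchronized product `A ⊗ T` of a TGBA and a Kripke structure. -/
def synchProd {α : Type} (A : TGBA α) (T : Kripke α) : TGBA α where
  AP := T.AP
  Q := A.Q × T.S
  F := A.F
  init := (A.init, T.init)
  δ := synchδ A T

/-- The stuttering synchronized product `A ⊗̃ T`: the synchronized product
together with the extra stuttering transitions. -/
def stutProd {α : Type} (A : TGBA α) (T : Kripke α) : TGBA α where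
  AP := T.AP
  Q := A.Q × T.S
  F := A.F
  init := (A.init, T.init)
  δ := synchδ A T ∪
    {t | ∃ q₁ s₁ s₂,
      t = ((q₁, s₁), assignForm T.AP (T.lab s₁), (∅ : Set A.F), (q₁, s₂)) ∧
      (s₁, s₂) ∈ T.Δ ∧ AgreeOn (A.FVq q₁) (T.lab s₁) (T.lab s₂)}

/-- The Symbolic Observation Graph of `T` over the observed propositions `E`:
a Kripke structure whose states are aggregates (`Sum.inl`) and divergent
states (`Sum.inr`, assignments over `E`). -/
noncomputable def SOG {α : Type} (T : Kripke α) (E : Finset α) : Kripke α where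
  AP := E
  S := Set T.S ⊕ ({x // x ∈ E} → Bool)
  lab := fun x =>
    match x with
    | Sum.inl a => restrS ↑E (T.aggLab a)
    | Sum.inr l => fun p => if h : p ∈ E then l ⟨p, h⟩ else false
  Δ := {pr |
    (∃ a a' : Set T.S, pr = (Sum.inl a, Sum.inl a') ∧ T.IsAgg ↑E a ∧ T.IsAgg ↑E a' ∧
      a' = T.ReachF (T.SuccF a (fun ρ => AgreeOn ↑E ρ (T.aggLab a')) \ a)
          fun ρ => AgreeOn ↑E ρ (T.aggLab a')) ∨
    (∃ (a : Set T.S) (l : {x // x ∈ E} → Bool), pr = (Sum.inl a, Sum.inr l) ∧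
      T.IsAgg ↑E a ∧ T.HasCycle a ∧ ∀ p : {x // x ∈ E}, l p = T.aggLab a ↑p) ∨
    ∃ l : {x // x ∈ E} → Bool, pr = (Sum.inr l, Sum.inr l)}
  init := Sum.inl (T.ReachF {T.init} fun ρ => AgreeOn ↑E ρ (T.lab T.init))

/-- The finite set of propositions of `AP` observable from `q`. -/
noncomputable def fvFinset {α : Type} (A : TGBA α) (q : A.Q) : Finset α :=
  A.AP.filter fun p => p ∈ A.FVq q

/-- The Symbolic Observation Product `A ▷ T`: a TGBA whose states pair a state of
`A` with either an aggregate (`Sum.inl`) or a divergent state (`Sum.inr`, an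
assignment over `FV(q)`, canonically `false` outside `FV(q)`). -/
noncomputable def SOP {α : Type} (A : TGBA α) (T : Kripke α) : TGBA α where
  AP := A.AP
  Q := A.Q × (Set T.S ⊕ (α → Bool))
  F := A.F
  init := (A.init,
    Sum.inl (T.ReachF {T.init} fun ρ => AgreeOn (A.FVq A.init) ρ (T.lab T.init)))
  δ := {t |
    -- aggregate to aggregate
    (∃ (q₁ q₂ : A.Q) (a₁ a₂ : Set T.S) (ac : Set A.F),
      t = ((q₁, Sum.inl a₁), assignForm (fvFinset A q₁) (T.aggLab a₁), ac,
           (q₂, Sum.inl a₂)) ∧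
      T.IsAgg (A.FVq q₁) a₁ ∧ T.IsAgg (A.FVq q₂) a₂ ∧
      (∃ f : BForm α, (q₁, f, ac, q₂) ∈ A.δ ∧
        f.eval (restrS (A.FVq q₁) (T.aggLab a₁)) = true) ∧
      ∃ l' : α → Bool,
        a₂ = T.ReachF (T.SuccF a₁ (fun ρ => AgreeOn (A.FVq q₂) ρ l') \ a₁)
            fun ρ => AgreeOn (A.FVq q₂) ρ l') ∨
    -- aggregate to divergent
    (∃ (q₁ q₂ : A.Q) (a : Set T.S) (l₂ : α → Bool) (ac : Set A.F),
      t = ((q₁, Sum.inl a), assignForm (fvFinset A q₁) (T.aggLab a), ac,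
           (q₂, Sum.inr l₂)) ∧
      T.IsAgg (A.FVq q₁) a ∧ T.HasCycle a ∧
      l₂ = restrS (A.FVq q₂) (T.aggLab a) ∧
      ∃ f : BForm α, (q₁, f, ac, q₂) ∈ A.δ ∧
        f.eval (restrS (A.FVq q₁) (T.aggLab a)) = true) ∨
    -- divergent to divergent
    ∃ (q₁ q₂ : A.Q) (l₁ l₂ : α → Bool) (ac : Set A.F),
      t = ((q₁, Sum.inr l₁), assignForm (fvFinset A q₁) l₁, ac, (q₂, Sum.inr l₂)) ∧
      l₁ = restrS (A.FVq q₁) l₁ ∧ l₂ = restrS (A.FVq q₂) l₁ ∧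
      ∃ f : BForm α, (q₁, f, ac, q₂) ∈ A.δ ∧ f.eval l₁ = true}

/-- `SF(q, ac)` as a predicate on assignments: `ρ` satisfies the disjunction of
the labels of the self-loops on `q` whose acceptance sets are included in `ac`. -/
def SFpred {α : Type} (A : TGBA α) (q : A.Q) (ac : Set A.F) : (α → Bool) → Prop :=
  fun ρ => ∃ (f : BForm α) (ac' : Set A.F), (q, f, ac', q) ∈ A.δ ∧ ac' ⊆ ac ∧ f.eval ρ = true

/-- The Self-Loop Aggregation Product `A ⊠ T`. -/
def SLAP {α : Type} (A : TGBA α) (T : Kripke α) : TGBA α where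
  AP := ∅
  Q := A.Q × Set T.S
  F := A.F
  init := (A.init, T.FReach {T.init} (SFpred A A.init ∅))
  δ := {t | ∃ (q₁ q₂ : A.Q) (a₁ a₂ : Set T.S) (ac : Set A.F),
    t = ((q₁, a₁), BForm.tru, ac, (q₂, a₂)) ∧ a₁.Nonempty ∧ a₂.Nonempty ∧
    ∃ f : BForm α, (q₁, f, ac, q₂) ∈ A.δ ∧ (q₁ = q₂ → ac ≠ ∅) ∧
      a₂ = T.FReach (T.FSucc a₁ fun ρ => f.eval ρ = true) (SFpred A q₂ ac)}

/-!
From `A ⊗ T` to `A ⊠ T`: the relation "same automaton state, and `s` lies in an aggregate closed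
under the self-loops that carry no acceptance condition" is a simulation up to stuttering. A step of
`A ⊗ T` along such a self-loop stays inside the aggregate, and every other step is matched by a
transition of `A ⊠ T` with the same acceptance set. Acceptance conditions occur infinitely often,
so infinitely many steps are matched.

From `A ⊠ T` to `A ⊗ T`: every state of an aggregate is reached in `A ⊗ T` from some state of the
preceding aggregate, by one transition carrying the acceptance set of the `A ⊠ T` transition
followed by self-loops. Aggregates are finite, so by König's lemma these backward links contain an
infinite forward chain, and concatenating its finite segments gives a run that meets every
acceptance set of the original one.
-/

section Sequences

variable {X : Type*} {r : X → X → Prop}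

theorem exists_segment_of_transGen {a b : X} (h : Relation.TransGen r a b) :
    ∃ (n : ℕ) (p : ℕ → X), p 0 = a ∧ p (n + 1) = b ∧ ∀ j ≤ n, r (p j) (p (j + 1)) := by
  induction h using Relation.TransGen.head_induction_on with
  | @single a hab =>
    refine ⟨0, fun | 0 => a | _ + 1 => b, rfl, rfl, fun j hj => ?_⟩
    obtain rfl := Nat.le_zero.mp hj
    exact hab
  | @head a c hac _ ih =>
    obtain ⟨n, p, rfl, hend, hp⟩ := ih
    refine ⟨n + 1, fun | 0 => a | j + 1 => p j, rfl, hend, fun j hj => ?_⟩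
    cases j with
    | zero => exact hac
    | succ j => exact hp j (Nat.succ_le_succ_iff.mp hj)

theorem exists_lex_enumeration (n : ℕ → ℕ) :
    ∃ (c : ℕ → ℕ × ℕ) (φ : ℕ → ℕ), φ 0 = 0 ∧ StrictMono φ ∧ (∀ i, c (φ i) = (i, 0)) ∧
      ∀ k, (c k).2 ≤ n (c k).1 ∧
        c (k + 1) = if (c k).2 < n (c k).1 then ((c k).1, (c k).2 + 1) else ((c k).1 + 1, 0) := by
  let next : ℕ × ℕ → ℕ × ℕ := fun c => if c.2 < n c.1 then (c.1, c.2 + 1) else (c.1 + 1, 0)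
  let c : ℕ → ℕ × ℕ := fun k => next^[k] (0, 0)
  let φ : ℕ → ℕ := fun i => ∑ j ∈ Finset.range i, (n j + 1)
  have c_succ (k : ℕ) : c (k + 1) = next (c k) := Function.iterate_succ_apply' next k _
  have φ_succ (i : ℕ) : φ (i + 1) = φ i + n i + 1 := Finset.sum_range_succ _ i
  have c_le (k : ℕ) : (c k).2 ≤ n (c k).1 := by
    cases k with
    | zero => exact Nat.zero_le _
    | succ k =>
      rw [c_succ]
      by_cases hlt : (c k).2 < n (c k).1
      · rw [show next (c k) = ((c k).1, (c k).2 + 1) from if_pos hlt]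
        exact hlt
      · rw [show next (c k) = ((c k).1 + 1, 0) from if_neg hlt]
        exact Nat.zero_le _
  have c_within {i : ℕ} (hi : c (φ i) = (i, 0)) : ∀ j ≤ n i, c (φ i + j) = (i, j) := by
    intro j hj
    induction j with
    | zero => exact hi
    | succ j ih =>
      rw [← Nat.add_assoc, c_succ, ih (Nat.le_of_succ_le hj)]
      exact if_pos hj
  have c_start (i : ℕ) : c (φ i) = (i, 0) := by
    induction i with
    | zero => rfl
    | succ i ih =>
      rw [φ_succ, c_succ, c_within ih _ le_rfl]
      exact if_neg (lt_irrefl _)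
  exact ⟨c, φ, rfl, strictMono_nat_of_lt_succ fun i => by rw [φ_succ]; omega, c_start,
    fun k => ⟨c_le k, c_succ k⟩⟩

theorem exists_chain_of_transGen {x : ℕ → X} (h : ∀ i, Relation.TransGen r (x i) (x (i + 1))) :
    ∃ (y : ℕ → X) (φ : ℕ → ℕ), φ 0 = 0 ∧ StrictMono φ ∧
      (∀ k, r (y k) (y (k + 1))) ∧ ∀ i, y (φ i) = x i := by
  choose n p hstart hend hp using fun i => exists_segment_of_transGen (h i)
  obtain ⟨c, φ, φ_zero, φ_mono, c_start, hc⟩ := exists_lex_enumeration n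
  refine ⟨fun k => p (c k).1 (c k).2, φ, φ_zero, φ_mono, fun k => ?_, fun i => ?_⟩
  · obtain ⟨c_le, c_succ⟩ := hc k
    have next_point : p (c (k + 1)).1 (c (k + 1)).2 = p (c k).1 ((c k).2 + 1) := by
      rw [c_succ]
      split_ifs with hlt
      · rfl
      · rw [hstart, ← hend, le_antisymm c_le (not_lt.mp hlt)]
    simpa only [next_point] using hp _ _ c_le
  · simp only [c_start, hstart]

theorem apply_nth_count_of_stutter {y : ℕ → X} {p : ℕ → Prop} (hp : (Set.ofPred p).Infinite)
    (hstutter : ∀ i, ¬ p i → y (i + 1) = y i) (i : ℕ) : y (Nat.nth p (Nat.count p i)) = y i := by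
  have constant : ∀ j, i ≤ j → j ≤ Nat.nth p (Nat.count p i) → y j = y i := by
    intro j hij
    induction j, hij using Nat.le_induction with
    | base => exact fun _ => rfl
    | succ j hij ih =>
      intro hj
      have not_p : ¬ p j := fun hpj =>
        (Nat.nth_count_eq_sInf p i ▸ hj : j < sInf {k | p k ∧ i ≤ k}).not_ge
          (Nat.sInf_le ⟨hpj, hij⟩)
      exact (hstutter j not_p).trans (ih (Nat.le_of_succ_le hj))
  exact constant _ (Nat.le_nth_count hp i) le_rfl

end Sequences

section Koenig

variable {S : ℕ → Type*} [∀ i, Nonempty (S i)] {R : ∀ i, S i → S (i + 1) → Prop}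

theorem exists_prefix_of_forall_exists_pred (h : ∀ i s', ∃ s, R i s s') (n : ℕ) (s : S n) :
    ∃ σ : ∀ i, S i, σ n = s ∧ ∀ i < n, R i (σ i) (σ (i + 1)) := by
  induction n with
  | zero =>
    exact ⟨Function.update (fun i => Classical.arbitrary (S i)) 0 s, Function.update_self ..,
      fun i hi => absurd hi i.not_lt_zero⟩
  | succ n ih =>
    obtain ⟨t, hts⟩ := h n s
    obtain ⟨σ, rfl, hσ⟩ := ih t
    refine ⟨Function.update σ (n + 1) s, Function.update_self .., fun i hi => ?_⟩
    rw [Function.update_of_ne hi.ne]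
    obtain hlt | rfl := Nat.lt_succ_iff_lt_or_eq.mp hi
    · rw [Function.update_of_ne (Nat.succ_lt_succ hlt).ne]
      exact hσ i hlt
    · rwa [Function.update_self]

-- König's lemma, as compactness of the product of the finite discrete spaces `S i`.
theorem exists_chain_of_forall_exists_pred [∀ i, Finite (S i)] (h : ∀ i s', ∃ s, R i s s') :
    ∃ σ : ∀ i, S i, ∀ i, R i (σ i) (σ (i + 1)) := by
  let _ : ∀ i, TopologicalSpace (S i) := fun _ => ⊥
  have _ : ∀ i, DiscreteTopology (S i) := fun _ => ⟨rfl⟩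
  let C : ℕ → Set (∀ i, S i) := fun n => {σ | ∀ i < n, R i (σ i) (σ (i + 1))}
  have C_closed (n : ℕ) : IsClosed (C n) := by
    simp only [C, Set.ofPred_forall]
    refine isClosed_iInter fun i => isClosed_iInter fun _ => ?_
    exact (isClosed_discrete {z : S i × S (i + 1) | R i z.1 z.2}).preimage
      ((continuous_apply i).prodMk (continuous_apply (i + 1)))
  obtain ⟨σ, hσ⟩ := IsCompact.nonempty_iInter_of_sequence_nonempty_isCompact_isClosed C
    (fun n σ hσ i hi => hσ i (Nat.lt_succ_of_lt hi))
    (fun n => (exists_prefix_of_forall_exists_pred h n (Classical.arbitrary _)).imp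
      fun _ hσ => hσ.2)
    (C_closed 0).isCompact C_closed
  exact ⟨σ, fun i => Set.mem_iInter.mp hσ (i + 1) i i.lt_succ_self⟩

end Koenig

namespace TGBA

variable {α : Type} {A : TGBA α}

theorem IsRun.step_mem {π : ℕ → A.Q × BForm α × Set A.F × A.Q} (h : A.IsRun π) (i : ℕ) :
    ((π i).1, (π i).2.1, (π i).2.2.1, (π (i + 1)).1) ∈ A.δ :=
  (h.2 i).2 ▸ (h.2 i).1

/-- `t'` is a transition of `A` that can follow `t` in a run. The tuple `t` itself need not be a
transition of `A`, so that a run can be started from a fictitious transition into `A.init`. -/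
def Follows (A : TGBA α) (t t' : A.Q × BForm α × Set A.F × A.Q) : Prop :=
  t' ∈ A.δ ∧ t.2.2.2 = t'.1

theorem Reach.transGen_follows {t t' : A.Q × BForm α × Set A.F × A.Q}
    (h : A.Reach t.2.2.2 t'.1) (ht' : t' ∈ A.δ) : Relation.TransGen A.Follows t t' := by
  generalize hq : t.2.2.2 = q at h
  induction h using Relation.ReflTransGen.head_induction_on generalizing t with
  | refl => exact .single ⟨ht', hq⟩
  | head hstep _ ih =>
    obtain ⟨f, ac, hδ⟩ := hstep
    exact .head ⟨hδ, hq⟩ (ih rfl)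

theorem exists_isRun_of_reach {t : ℕ → A.Q × BForm α × Set A.F × A.Q} (ht : ∀ i, t i ∈ A.δ)
    (hinit : A.Reach A.init (t 0).1) (hreach : ∀ i, A.Reach (t i).2.2.2 (t (i + 1)).1) :
    ∃ (π : ℕ → A.Q × BForm α × Set A.F × A.Q) (φ : ℕ → ℕ),
      A.IsRun π ∧ StrictMono φ ∧ ∀ i, π (φ i) = t i := by
  let start : A.Q × BForm α × Set A.F × A.Q := (A.init, BForm.tru, ∅, A.init)
  let x : ℕ → A.Q × BForm α × Set A.F × A.Q := fun | 0 => start | i + 1 => t i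
  have link : ∀ i, Relation.TransGen A.Follows (x i) (x (i + 1))
    | 0 => Reach.transGen_follows (t := start) hinit (ht 0)
    | i + 1 => Reach.transGen_follows (hreach i) (ht (i + 1))
  obtain ⟨y, φ, φ_zero, φ_mono, hy, hφ⟩ := exists_chain_of_transGen link
  have φ_pos (i : ℕ) : 0 < φ (i + 1) := φ_zero ▸ φ_mono i.succ_pos
  have y_zero : y 0 = start := φ_zero ▸ hφ 0
  refine ⟨fun k => y (k + 1), fun i => φ (i + 1) - 1, ⟨?_, fun k => ⟨(hy k).1, (hy (k + 1)).2⟩⟩,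
    fun i j hij => ?_, fun i => ?_⟩
  · rw [← (hy 0).2, y_zero]
  · exact Nat.sub_lt_sub_right (φ_pos i) (φ_mono (Nat.succ_lt_succ hij))
  · simpa only [Nat.sub_add_cancel (φ_pos i)] using hφ (i + 1)

theorem hasAccRun_of_reach {t : ℕ → A.Q × BForm α × Set A.F × A.Q} (ht : ∀ i, t i ∈ A.δ)
    (hinit : A.Reach A.init (t 0).1) (hreach : ∀ i, A.Reach (t i).2.2.2 (t (i + 1)).1)
    (hacc : ∀ c i, ∃ j, i ≤ j ∧ c ∈ (t j).2.2.1) : A.HasAccRun := by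
  obtain ⟨π, φ, hπ, φ_mono, hφ⟩ := exists_isRun_of_reach ht hinit hreach
  refine ⟨π, hπ, fun c i => ?_⟩
  obtain ⟨j, hij, hc⟩ := hacc c i
  exact ⟨φ j, hij.trans φ_mono.le_apply, by rwa [hφ]⟩

theorem hasAccRun_of_stutter [Nonempty A.F] {q : ℕ → A.Q} {f : ℕ → BForm α} {ac : ℕ → Set A.F}
    (hinit : q 0 = A.init)
    (hstep : ∀ i, (q i, f i, ac i, q (i + 1)) ∈ A.δ ∨ ac i = ∅ ∧ q (i + 1) = q i)
    (hacc : ∀ c i, ∃ j, i ≤ j ∧ c ∈ ac j) : A.HasAccRun := by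
  let Moves : ℕ → Prop := fun i => (q i, f i, ac i, q (i + 1)) ∈ A.δ
  have moves_of_mem {c : A.F} {i : ℕ} (hc : c ∈ ac i) : Moves i :=
    (hstep i).resolve_right fun h => by simp [h.1] at hc
  have moves_infinite : (Set.ofPred Moves).Infinite :=
    Set.infinite_of_forall_exists_gt fun n =>
      let ⟨j, hj, hc⟩ := hacc (Classical.arbitrary A.F) (n + 1)
      ⟨j, moves_of_mem hc, hj⟩
  let ν := Nat.nth Moves
  have q_nth_count (i : ℕ) : q (ν (Nat.count Moves i)) = q i :=
    apply_nth_count_of_stutter moves_infinite (fun i hi => ((hstep i).resolve_left hi).2) i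
  have count_nth_succ (k : ℕ) : Nat.count Moves (ν k + 1) = k + 1 :=
    Nat.count_nth_succ fun hfin => absurd hfin moves_infinite
  refine ⟨fun k => (q (ν k), f (ν k), ac (ν k), q (ν k + 1)), ⟨?_, fun k => ⟨?_, ?_⟩⟩,
    fun c i => ?_⟩
  · exact (Nat.count_zero Moves ▸ q_nth_count 0).trans hinit
  · exact Nat.nth_mem_of_infinite moves_infinite k
  · exact (count_nth_succ k ▸ q_nth_count (ν k + 1)).symm
  · obtain ⟨j, hij, hc⟩ := hacc c (ν i)
    have nth_count : ν (Nat.count Moves j) = j := Nat.nth_count (moves_of_mem hc)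
    refine ⟨Nat.count Moves j, (Nat.nth_le_nth moves_infinite).mp ?_, ?_⟩
    · exact hij.trans_eq nth_count.symm
    · simpa only [nth_count] using hc

end TGBA

namespace Kripke

variable {α : Type} {T : Kripke α} {a b : Set T.S} {P P' : (α → Bool) → Prop}

theorem subset_FReach : a ⊆ T.FReach a P :=
  Set.subset_sInter fun _ hb => hb.1

theorem FReach_subset (hab : a ⊆ b) (hb : T.FSucc b P ⊆ b) : T.FReach a P ⊆ b :=
  Set.sInter_subset_of_mem ⟨hab, hb⟩

theorem FSucc_mono_right (h : ∀ ρ, P ρ → P' ρ) : T.FSucc a P ⊆ T.FSucc a P' :=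
  fun _ ⟨s, hs, hΔ, hP⟩ => ⟨s, hs, hΔ, h _ hP⟩

theorem FSucc_FReach_subset : T.FSucc (T.FReach a P) P ⊆ T.FReach a P :=
  fun _ ⟨s, hs, hΔ, hP⟩ b hb => hb.2 ⟨s, hs b hb, hΔ, hP⟩

end Kripke

section Products

variable {α : Type} {A : TGBA α} {T : Kripke α}

theorem SFpred_mono {q : A.Q} {ac ac' : Set A.F} (h : ac ⊆ ac') {ρ : α → Bool}
    (hρ : SFpred A q ac ρ) : SFpred A q ac' ρ :=
  let ⟨f, ac₀, hδ, hac₀, hf⟩ := hρ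
  ⟨f, ac₀, hδ, hac₀.trans h, hf⟩

/-- The simulation between states `x` of `A ⊗ T` and `y` of `A ⊠ T`: the automaton states are equal
and the Kripke state of `x` lies in the aggregate of `y`, which is closed under the self-loops
carrying no acceptance condition. -/
def CoveredBy (x : A.Q × T.S) (y : A.Q × Set T.S) : Prop :=
  x.1 = y.1 ∧ x.2 ∈ y.2 ∧ T.FSucc y.2 (SFpred A y.1 ∅) ⊆ y.2

theorem coveredBy_FReach {q : A.Q} {s : T.S} {a : Set T.S} (hs : s ∈ a) (ac : Set A.F) :
    CoveredBy (q, s) (q, T.FReach a (SFpred A q ac)) :=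
  ⟨rfl, Kripke.subset_FReach hs,
    (Kripke.FSucc_mono_right fun _ => SFpred_mono (Set.empty_subset ac)).trans
      Kripke.FSucc_FReach_subset⟩

theorem CoveredBy.exists_step {t : (A.Q × T.S) × BForm α × Set A.F × (A.Q × T.S)}
    {y : A.Q × Set T.S} (h : CoveredBy t.1 y) (ht : t ∈ (synchProd A T).δ) :
    ∃ y' : A.Q × Set T.S, CoveredBy t.2.2.2 y' ∧
      ((y, BForm.tru, t.2.2.1, y') ∈ (SLAP A T).δ ∨ t.2.2.1 = ∅ ∧ y' = y) := by
  obtain ⟨q₁, q₂, s₁, s₂, ac, rfl, hΔ, g, hδ, hg⟩ := ht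
  obtain ⟨q, a⟩ := y
  obtain ⟨rfl : q₁ = q, hs₁ : s₁ ∈ a, hclosed⟩ := h
  by_cases hloop : q₁ = q₂ ∧ ac = ∅
  · obtain ⟨rfl, rfl⟩ := hloop
    exact ⟨(q₁, a), ⟨rfl, hclosed ⟨s₁, hs₁, hΔ, g, ∅, hδ, subset_rfl, hg⟩, hclosed⟩,
      .inr ⟨rfl, rfl⟩⟩
  · have covered := coveredBy_FReach (q := q₂) (a := T.FSucc a fun ρ => g.eval ρ = true)
      ⟨s₁, hs₁, hΔ, hg⟩ ac
    exact ⟨_, covered, .inl ⟨q₁, q₂, a, _, ac, rfl, ⟨s₁, hs₁⟩, ⟨s₂, covered.2.1⟩, g, hδ,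
      fun hq hac => hloop ⟨hq, hac⟩, rfl⟩⟩

theorem SLAP_hasAccRun_of_synchProd [Nonempty A.F] (h : (synchProd A T).HasAccRun) :
    (SLAP A T).HasAccRun := by
  obtain ⟨π, ⟨hinit, hπ⟩, hacc⟩ := h
  have step (i : ℕ) (y : {y : A.Q × Set T.S // CoveredBy (π i).1 y}) :
      ∃ y' : {y' : A.Q × Set T.S // CoveredBy (π (i + 1)).1 y'},
        (y.1, BForm.tru, (π i).2.2.1, y'.1) ∈ (SLAP A T).δ ∨ (π i).2.2.1 = ∅ ∧ y'.1 = y.1 := by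
    obtain ⟨y', hcov, hy'⟩ := y.2.exists_step (hπ i).1
    exact ⟨⟨y', (hπ i).2 ▸ hcov⟩, hy'⟩
  choose next hnext using step
  have init_covered : CoveredBy (π 0).1 (SLAP A T).init :=
    hinit ▸ coveredBy_FReach (Set.mem_singleton T.init) ∅
  let y : ∀ i, {y : A.Q × Set T.S // CoveredBy (π i).1 y} := fun i =>
    Nat.rec ⟨(SLAP A T).init, init_covered⟩ next i
  have : Nonempty (SLAP A T).F := ‹Nonempty A.F›
  exact TGBA.hasAccRun_of_stutter (A := SLAP A T) (q := fun i => (y i).1)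
    (f := fun _ => BForm.tru) rfl (fun i => hnext i (y i)) hacc

theorem exists_reach_of_mem_FReach {q : A.Q} {a : Set T.S} {ac : Set A.F} {s : T.S}
    (hs : s ∈ T.FReach a (SFpred A q ac)) :
    ∃ s₀ ∈ a, (synchProd A T).Reach (q, s₀) (q, s) := by
  refine Kripke.FReach_subset (b := {s | ∃ s₀ ∈ a, (synchProd A T).Reach (q, s₀) (q, s)})
    (fun s hs => ⟨s, hs, .refl⟩) ?_ hs
  rintro s' ⟨s, ⟨s₀, hs₀, hreach⟩, hΔ, g, ac', hδ, -, hg⟩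
  exact ⟨s₀, hs₀, hreach.tail ⟨_, ac', q, q, s, s', ac', rfl, hΔ, g, hδ, hg⟩⟩

theorem reach_of_mem_SLAP_init {y : A.Q × Set T.S} (hy : y = (SLAP A T).init) {s : T.S}
    (hs : s ∈ y.2) : (synchProd A T).Reach (synchProd A T).init (y.1, s) := by
  subst hy
  obtain ⟨_, rfl, hreach⟩ := exists_reach_of_mem_FReach hs
  exact hreach

theorem exists_synchProd_transition_of_mem_SLAP {y y' : A.Q × Set T.S} {l : BForm α}
    {ac : Set A.F} (h : (y, l, ac, y') ∈ (SLAP A T).δ) {s' : T.S} (hs' : s' ∈ y'.2) :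
    ∃ s ∈ y.2, ∃ t ∈ (synchProd A T).δ,
      t.1 = (y.1, s) ∧ t.2.2.1 = ac ∧ (synchProd A T).Reach t.2.2.2 (y'.1, s') := by
  obtain ⟨q₁, q₂, a₁, _, ac, heq, -, -, f, hδ, -, rfl⟩ := h
  cases heq
  obtain ⟨s₀, ⟨s, hs, hΔ, hf⟩, hreach⟩ := exists_reach_of_mem_FReach hs'
  exact ⟨s, hs, _, ⟨q₁, q₂, s, s₀, ac, rfl, hΔ, f, hδ, hf⟩, rfl, rfl, hreach⟩

theorem nonempty_source_of_mem_SLAP {y y' : A.Q × Set T.S} {l : BForm α} {ac : Set A.F}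
    (h : (y, l, ac, y') ∈ (SLAP A T).δ) : y.2.Nonempty := by
  obtain ⟨_, _, _, _, _, heq, hne, -⟩ := h
  cases heq
  exact hne

theorem synchProd_hasAccRun_of_SLAP [Finite T.S] (h : (SLAP A T).HasAccRun) :
    (synchProd A T).HasAccRun := by
  obtain ⟨π, hrun, hacc⟩ := h
  let y : ℕ → A.Q × Set T.S := fun i => (π i).1
  have step (i : ℕ) : (y i, (π i).2.1, (π i).2.2.1, y (i + 1)) ∈ (SLAP A T).δ :=
    hrun.step_mem i
  have pred (i : ℕ) (s' : (y (i + 1)).2) : ∃ s : (y i).2, ∃ t ∈ (synchProd A T).δ,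
      t.1 = ((y i).1, s.1) ∧ t.2.2.1 = (π i).2.2.1 ∧
      (synchProd A T).Reach t.2.2.2 ((y (i + 1)).1, s'.1) := by
    obtain ⟨s, hs, ht⟩ := exists_synchProd_transition_of_mem_SLAP (step i) s'.2
    exact ⟨⟨s, hs⟩, ht⟩
  have (i : ℕ) : Nonempty (y i).2 := (nonempty_source_of_mem_SLAP (step i)).to_subtype
  obtain ⟨σ, hσ⟩ := exists_chain_of_forall_exists_pred (S := fun i => (y i).2) pred
  choose t ht hsource hac hreach using hσ
  refine TGBA.hasAccRun_of_reach ht ?_ (fun i => ?_) fun c i => ?_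
  · rw [hsource 0]
    exact reach_of_mem_SLAP_init hrun.1 (σ 0).2
  · rw [hsource (i + 1)]
    exact hreach i
  · obtain ⟨j, hij, hc⟩ := hacc c i
    exact ⟨j, hij, (hac j).symm ▸ hc⟩

end Products

theorem stmt14_general {α : Type} (A : TGBA α) (T : Kripke α) [Nonempty A.F] [Finite T.S] :
    (synchProd A T).HasAccRun ↔ (SLAP A T).HasAccRun :=
  ⟨SLAP_hasAccRun_of_synchProd, synchProd_hasAccRun_of_SLAP⟩

/-- The Self-Loop Aggregation Product `A ⊠ T` has an accepting
run if and only if the synchronized product `A ⊗ T` does: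
`Acc(A ⊗ T) ≠ ∅ ⟺ Acc(A ⊠ T) ≠ ∅`. -/
theorem stmt14 {α : Type} (A : TGBA α) (T : Kripke α)
    [Finite A.Q] [Finite A.F] [Nonempty A.F] [Finite T.S]
    (hwf : A.WF) (hAP : A.AP ⊆ T.AP) :
    (synchProd A T).HasAccRun ↔ (SLAP A T).HasAccRun :=
  stmt14_general A T
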